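/- Let P be a finite set of strings over Σ (P : Finset (List Σ)) and write ‖P‖ = ∑_{s ∈ P} s.length. Suppose w₀ is a linear superstring of P of minimum length, c₀ is a circular superstring of f(P) of minimum length, and c is any circular superstring of f(P). Then there exists a linear superstring w of P with 2 * w.length ≤ c.length such that, as integers, (‖P‖ − w₀.length) * (2‖P‖ − c.length) ≤ (2‖P‖ − c₀.length) * (‖P‖ − w.length) (i.e., the compression-measure approximation ratio is preserved; note ‖f(P)‖ = 2‖P‖). -/

import Mathlib

/-- `lift w` embeds a string over `α` into the barred alphabet `α ⊕ α` using unbarred letters. -/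
def lift {α : Type*} (w : List α) : List (α ⊕ α) := w.map Sum.inl

/-- `bar w` embeds a string over `α` into the barred alphabet `α ⊕ α` using barred letters. -/
def bar {α : Type*} (w : List α) : List (α ⊕ α) := w.map Sum.inr

/-- `f(P) = {lift s | s ∈ P} ∪ {bar s | s ∈ P}`. -/
def barred {α : Type*} (P : Set (List α)) : Set (List (α ⊕ α)) := (lift '' P) ∪ (bar '' P)

/-- A linear superstring of `P` contains every string of `P` as an infix. -/
def IsLinearSuperstring {β : Type*} (P : Set (List β)) (w : List β) : Prop := ∀ s ∈ P, s <:+: w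

/-- `s` is a circular substring of the circular string `c` if `s` is an infix of `c^n`
for some `n ≥ 1`. -/
def IsCircularSubstring {β : Type*} (c s : List β) : Prop :=
  ∃ n, 1 ≤ n ∧ s <:+: (List.replicate n c).flatten

/-- A circular superstring of `P` has every string of `P` as a circular substring. -/
def IsCircularSuperstring {β : Type*} (P : Set (List β)) (c : List β) : Prop :=
  ∀ s ∈ P, IsCircularSubstring c s

/-- The `Σ`-restriction of a string over the barred alphabet: keep the unbarred letters. -/
def restrict {α : Type*} (d : List (α ⊕ α)) : List α :=
  d.filterMap (Sum.elim some (fun _ => none))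

/-!
A circular superstring `c` of `f(P)` contains a barred letter `y` unless all strings of `P` are
empty. No unbarred string can straddle `y`, so cutting `c` open at `y` and deleting its barred
letters leaves a linear superstring of `P`; exchanging the roles of the two alphabets gives another
one, and the lengths of the two add up to at most `|c|`. The shorter one is the required `w`.
Conversely, `lift w ++ bar w` is a circular superstring of `f(P)`, so optimal lengths correspond
under doubling, and the compression inequality follows from `2|w| ≤ |c|` and `|w₀| ≤ ‖P‖`, the
latter because concatenating all of `P` gives a linear superstring.
-/

section Substrings

variable {β γ : Type*}

theorem infix_or_infix_of_infix_append_cons {s u v : List β} {y : β} (h : s <:+: u ++ y :: v)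
    (hy : y ∉ s) : s <:+: u ∨ s <:+: v := by
  have eq_nil_of_prefix {t : List β} (ht : t <+: y :: v) (hyt : y ∉ t) : t = [] := by
    rcases List.prefix_cons_iff.1 ht with rfl | ⟨r, rfl, -⟩
    · rfl
    · exact absurd List.mem_cons_self hyt
  rcases List.infix_append_iff.1 h with hu | hyv | ⟨t, r, rfl, ht, hr⟩
  · exact Or.inl hu
  · rcases List.infix_cons_iff.1 hyv with hs | hv
    · rw [eq_nil_of_prefix hs hy]
      exact Or.inl List.nil_infix
    · exact Or.inr hv
  · rw [eq_nil_of_prefix hr (fun hyr ↦ hy (List.mem_append_right t hyr)), List.append_nil]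
    exact Or.inl ht.isInfix

theorem infix_append_of_infix_append_flatten_replicate {s a b : List β} {y : β} (hy : y ∉ s) (n : ℕ)
    (h : s <:+: b ++ (List.replicate n (a ++ y :: b)).flatten) : s <:+: b ++ a := by
  induction n with
  | zero =>
    rw [List.replicate_zero, List.flatten_nil, List.append_nil] at h
    exact h.trans (List.prefix_append b a).isInfix
  | succ n ih =>
    have unroll : b ++ (List.replicate (n + 1) (a ++ y :: b)).flatten =
        (b ++ a) ++ y :: (b ++ (List.replicate n (a ++ y :: b)).flatten) := by
      simp [List.replicate_succ]
    rw [unroll] at h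
    exact (infix_or_infix_of_infix_append_cons h hy).elim id ih

namespace IsCircularSubstring

variable {c s : List β}

theorem of_infix (h : s <:+: c) : IsCircularSubstring c s :=
  ⟨1, le_rfl, by simpa using h⟩

theorem map (f : β → γ) (h : IsCircularSubstring c s) :
    IsCircularSubstring (c.map f) (s.map f) := by
  obtain ⟨n, hn, hs⟩ := h
  exact ⟨n, hn, by simpa only [List.map_flatten, List.map_replicate] using hs.map f⟩

theorem subset (h : IsCircularSubstring c s) : s ⊆ c := by
  obtain ⟨n, -, hs⟩ := h
  intro x hx
  obtain ⟨l, hl, hxl⟩ := List.mem_flatten.1 (hs.subset hx)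
  rwa [List.eq_of_mem_replicate hl] at hxl

theorem infix_append_of_notMem {a b : List β} {y : β}
    (h : IsCircularSubstring (a ++ y :: b) s) (hy : y ∉ s) : s <:+: b ++ a := by
  obtain ⟨n, -, hs⟩ := h
  exact infix_append_of_infix_append_flatten_replicate hy n
    (hs.trans (List.suffix_append _ _).isInfix)

end IsCircularSubstring

end Substrings

section Restriction

variable {α : Type*}

theorem restrict_lift (s : List α) : restrict (lift s) = s := by
  simp [restrict, lift, List.filterMap_map, Function.comp_def]

theorem length_restrict (d : List (α ⊕ α)) : (restrict d).length = d.countP Sum.isLeft := by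
  rw [restrict, List.length_filterMap_eq_countP]
  congr 1
  ext (x | x) <;> rfl

theorem length_restrict_append_cons_inr (a b : List (α ⊕ α)) (x : α) :
    (restrict (a ++ Sum.inr x :: b)).length = (restrict (b ++ a)).length := by
  simp [length_restrict, List.countP_append, add_comm]

theorem length_restrict_add_length_restrict_map_swap (d : List (α ⊕ α)) :
    (restrict d).length + (restrict (d.map Sum.swap)).length = d.length := by
  rw [length_restrict, length_restrict, List.countP_map,
    List.length_eq_countP_add_countP Sum.isLeft]
  congr 2
  ext x
  simp

theorem infix_restrict_of_lift_infix {s : List α} {d : List (α ⊕ α)} (h : lift s <:+: d) :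
    s <:+: restrict d := by
  rw [← restrict_lift s]
  exact h.filterMap _

end Restriction

section Superstrings

variable {α : Type*} {P : Set (List α)}

theorem isCircularSuperstring_barred_iff {c : List (α ⊕ α)} :
    IsCircularSuperstring (barred P) c ↔
      ∀ s ∈ P, IsCircularSubstring c (lift s) ∧ IsCircularSubstring c (bar s) := by
  simp only [IsCircularSuperstring, barred, Set.mem_union, or_imp, forall_and,
    Set.forall_mem_image]

theorem IsLinearSuperstring.isCircularSuperstring_lift_append_bar {w : List α}
    (hw : IsLinearSuperstring P w) :
    IsCircularSuperstring (barred P) (lift w ++ bar w) :=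
  isCircularSuperstring_barred_iff.2 fun s hs ↦
    ⟨.of_infix (((hw s hs).map Sum.inl).trans (List.prefix_append _ _).isInfix),
      .of_infix (((hw s hs).map Sum.inr).trans (List.suffix_append _ _).isInfix)⟩

theorem isLinearSuperstring_flatten_toList (P : Finset (List α)) :
    IsLinearSuperstring (P : Set (List α)) P.toList.flatten :=
  fun _ hs ↦ List.infix_of_mem_flatten (Finset.mem_toList.2 hs)

namespace IsCircularSuperstring

variable {c : List (α ⊕ α)}

theorem map_swap (hc : IsCircularSuperstring (barred P) c) :
    IsCircularSuperstring (barred P) (c.map Sum.swap) := by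
  rw [isCircularSuperstring_barred_iff] at hc ⊢
  intro s hs
  obtain ⟨hlift, hbar⟩ := hc s hs
  exact ⟨by simpa [lift, bar, Function.comp_def] using hbar.map Sum.swap,
    by simpa [lift, bar, Function.comp_def] using hlift.map Sum.swap⟩

theorem isLinearSuperstring_restrict_append {a b : List (α ⊕ α)} {x : α}
    (hc : IsCircularSuperstring (barred P) (a ++ Sum.inr x :: b)) :
    IsLinearSuperstring P (restrict (b ++ a)) := fun s hs ↦
  infix_restrict_of_lift_infix <|
    (isCircularSuperstring_barred_iff.1 hc s hs).1.infix_append_of_notMem (by simp [lift])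

theorem isLinearSuperstring_nil (hc : IsCircularSuperstring (barred P) c)
    (hbar : ∀ x, Sum.inr x ∉ c) : IsLinearSuperstring P [] := by
  intro s hs
  have hsub : bar s ⊆ c := (isCircularSuperstring_barred_iff.1 hc s hs).2.subset
  have hs_nil : s = [] := List.eq_nil_iff_forall_not_mem.2 fun x hx ↦
    hbar x (hsub (List.mem_map_of_mem hx))
  rw [hs_nil]

theorem exists_isLinearSuperstring_length_le_restrict
    (hc : IsCircularSuperstring (barred P) c) :
    ∃ w, IsLinearSuperstring P w ∧ w.length ≤ (restrict c).length := by
  by_cases hbar : ∃ x, Sum.inr x ∈ c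
  · obtain ⟨x, hx⟩ := hbar
    obtain ⟨a, b, rfl⟩ := List.append_of_mem hx
    exact ⟨_, hc.isLinearSuperstring_restrict_append, (length_restrict_append_cons_inr a b x).ge⟩
  · exact ⟨[], hc.isLinearSuperstring_nil (not_exists.1 hbar), Nat.zero_le _⟩

theorem exists_isLinearSuperstring_two_mul_length_le
    (hc : IsCircularSuperstring (barred P) c) :
    ∃ w, IsLinearSuperstring P w ∧ 2 * w.length ≤ c.length := by
  obtain ⟨w₁, hw₁, hlen₁⟩ := hc.exists_isLinearSuperstring_length_le_restrict
  obtain ⟨w₂, hw₂, hlen₂⟩ := hc.map_swap.exists_isLinearSuperstring_length_le_restrict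
  have hsum := length_restrict_add_length_restrict_map_swap c
  rcases le_total w₁.length w₂.length with hle | hle
  · exact ⟨w₁, hw₁, by lia⟩
  · exact ⟨w₂, hw₂, by lia⟩

theorem length_eq_two_mul_length_of_minimal {w₀ : List α} {c₀ : List (α ⊕ α)}
    (hw₀ : IsLinearSuperstring P w₀)
    (hw₀min : ∀ w, IsLinearSuperstring P w → w₀.length ≤ w.length)
    (hc₀ : IsCircularSuperstring (barred P) c₀)
    (hc₀min : ∀ c, IsCircularSuperstring (barred P) c → c₀.length ≤ c.length) :
    c₀.length = 2 * w₀.length := by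
  apply le_antisymm
  · calc c₀.length ≤ (lift w₀ ++ bar w₀).length :=
          hc₀min _ hw₀.isCircularSuperstring_lift_append_bar
      _ = 2 * w₀.length := by simp [lift, bar, two_mul]
  · obtain ⟨w, hw, hlen⟩ := hc₀.exists_isLinearSuperstring_two_mul_length_le
    calc 2 * w₀.length ≤ 2 * w.length := Nat.mul_le_mul_left 2 (hw₀min w hw)
      _ ≤ c₀.length := hlen

end IsCircularSuperstring

theorem length_le_sum_of_minimal {P : Finset (List α)} {w₀ : List α}
    (hw₀min : ∀ w, IsLinearSuperstring (P : Set (List α)) w → w₀.length ≤ w.length) :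
    w₀.length ≤ ∑ s ∈ P, s.length := by
  calc w₀.length ≤ P.toList.flatten.length := hw₀min _ (isLinearSuperstring_flatten_toList P)
    _ = ∑ s ∈ P, s.length := by rw [List.length_flatten, Finset.sum_map_toList]

end Superstrings

/-- Strict-reduction inequality for the compression measure: from a circular superstring `c` of
`f(P)` one obtains a linear superstring `w` of `P` with `2|w| ≤ |c|` whose compression
approximation ratio for SLS on `P` is at most that of `c` for SCS on `f(P)`
(note `‖f(P)‖ = 2‖P‖`). -/
theorem strict_reduction_compression_measure {α : Type*} (P : Finset (List α))
    (w₀ : List α) (hw₀ : IsLinearSuperstring (↑P : Set (List α)) w₀)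
    (hw₀min : ∀ w : List α, IsLinearSuperstring (↑P : Set (List α)) w → w₀.length ≤ w.length)
    (c₀ : List (α ⊕ α)) (hc₀ : IsCircularSuperstring (barred (↑P : Set (List α))) c₀)
    (hc₀min : ∀ c' : List (α ⊕ α),
      IsCircularSuperstring (barred (↑P : Set (List α))) c' → c₀.length ≤ c'.length)
    (c : List (α ⊕ α)) (hc : IsCircularSuperstring (barred (↑P : Set (List α))) c) :
    ∃ w : List α, IsLinearSuperstring (↑P : Set (List α)) w ∧ 2 * w.length ≤ c.length ∧
      ((∑ s ∈ P, s.length : ℤ) - w₀.length) * (2 * (∑ s ∈ P, s.length : ℤ) - c.length) ≤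
        (2 * (∑ s ∈ P, s.length : ℤ) - c₀.length) * ((∑ s ∈ P, s.length : ℤ) - w.length) := by
  obtain ⟨w, hw, hlen⟩ := hc.exists_isLinearSuperstring_two_mul_length_le
  refine ⟨w, hw, hlen, ?_⟩
  have hopt : (c₀.length : ℤ) = 2 * w₀.length :=
    mod_cast IsCircularSuperstring.length_eq_two_mul_length_of_minimal hw₀ hw₀min hc₀ hc₀min
  have hw₀_le : (w₀.length : ℤ) ≤ ∑ s ∈ P, (s.length : ℤ) :=
    mod_cast length_le_sum_of_minimal hw₀min
  set N : ℤ := ∑ s ∈ P, (s.length : ℤ)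
  calc (N - w₀.length) * (2 * N - c.length)
      ≤ (N - w₀.length) * (2 * (N - w.length)) :=
        mul_le_mul_of_nonneg_left (by lia) (sub_nonneg.2 hw₀_le)
    _ = (2 * N - c₀.length) * (N - w.length) := by rw [hopt]; ring
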